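/- arXiv:2102.12192 — 11 statements merged into one kernel-verified Lean document; each statement's English description precedes it below -/
import Mathlib

section
/- Let l_1, …, l_N : ℝ^d → ℝ be differentiable and β-smooth (β > 0), let η > 0, and let (θ_t, p_t) be the MR-GD iterates with gradient step size α = 1/β. Then for every t ≥ 0, Σ_{i=1}^N p_{t+1,i} l_i(θ_{t+1}) − Σ_{i=1}^N p_{t,i} l_i(θ_t) ≤ −(1/(2β)) ‖Σ_{i=1}^N p_{t,i} ∇l_i(θ_t)‖², i.e., the weighted loss decreases by at least (1/(2β)) times the squared norm of the weighted gradient. -/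
open Real Finset

/-- The quadratic upper bound for a function with Lipschitz gradient. -/
lemma quad_upper {d : ℕ} (f : EuclideanSpace ℝ (Fin d) → ℝ) (β : ℝ)
    (hf : Differentiable ℝ f)
    (hs : ∀ x y : EuclideanSpace ℝ (Fin d),
      ‖gradient f x - gradient f y‖ ≤ β * ‖x - y‖)
    (x v : EuclideanSpace ℝ (Fin d)) :
    f (x + v) ≤ f x + inner ℝ (gradient f x) v + β / 2 * ‖v‖ ^ 2 := by
  have hder : ∀ s : ℝ, HasDerivAt
      (fun s : ℝ => f (x + s • v) - s * inner ℝ (gradient f x) v - β / 2 * ‖v‖ ^ 2 * s ^ 2)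
      (inner ℝ (gradient f (x + s • v)) v - inner ℝ (gradient f x) v - β * ‖v‖ ^ 2 * s) s := by
    intro s
    have h1 : HasDerivAt (fun s : ℝ => x + s • v) v s := by
      simpa using ((hasDerivAt_id s).smul_const v).const_add x
    have h2 := (hf (x + s • v)).hasGradientAt.hasFDerivAt.comp_hasDerivAt s h1
    have h3 := (h2.sub ((hasDerivAt_id s).mul_const (inner ℝ (gradient f x) v))).sub
      (((hasDerivAt_id s).pow 2).const_mul (β / 2 * ‖v‖ ^ 2))
    refine (h3.congr_deriv ?_)
    simp
    ring
  have hanti := antitoneOn_of_deriv_nonpos (convex_Icc (0 : ℝ) 1)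
    (fun s _ => (hder s).continuousAt.continuousWithinAt)
    (fun s _ => (hder s).differentiableAt.differentiableWithinAt)
    (by
      intro s hs'
      rw [interior_Icc] at hs'
      rw [(hder s).deriv, ← inner_sub_left]
      have h1 := real_inner_le_norm (gradient f (x + s • v) - gradient f x) v
      have h2 := hs (x + s • v) x
      rw [add_sub_cancel_left, norm_smul, Real.norm_eq_abs, abs_of_pos hs'.1] at h2
      have h3 := mul_le_mul_of_nonneg_right h2 (norm_nonneg v)
      nlinarith)
  have := hanti (Set.left_mem_Icc.2 zero_le_one) (Set.right_mem_Icc.2 zero_le_one) zero_le_one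
  simp only [one_smul, zero_smul, add_zero, one_mul, zero_mul, one_pow, mul_one, sub_zero,
    ne_eq, OfNat.ofNat_ne_zero, not_false_eq_true, zero_pow, mul_zero] at this
  linarith

/-- Reweighting a distribution by `exp (-η a)` does not increase the mean of `a`. -/
lemma reweight {N : ℕ} (q a : Fin N → ℝ) (η : ℝ) (hη : 0 < η)
    (hq : ∀ i, 0 ≤ q i) (hq1 : ∑ i, q i = 1) :
    ∑ i, q i * Real.exp (-η * a i) * a i
      ≤ (∑ i, q i * Real.exp (-η * a i)) * ∑ i, q i * a i := by
  set m := ∑ i, q i * a i with hm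
  have key : ∀ i, q i * Real.exp (-η * a i) * a i - q i * Real.exp (-η * a i) * m
      ≤ Real.exp (-η * m) * (q i * a i) - Real.exp (-η * m) * m * q i := by
    intro i
    have h : (Real.exp (-η * a i) - Real.exp (-η * m)) * (a i - m) ≤ 0 := by
      rcases le_total (a i) m with h | h
      · refine mul_nonpos_of_nonneg_of_nonpos (sub_nonneg.2 (Real.exp_le_exp.2 ?_)) (by linarith)
        nlinarith
      · refine mul_nonpos_of_nonpos_of_nonneg (sub_nonpos.2 (Real.exp_le_exp.2 ?_)) (by linarith)
        nlinarith
    nlinarith [mul_nonneg (hq i) (neg_nonneg.2 h)]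
  have := Finset.sum_le_sum (fun i (_ : i ∈ Finset.univ) => key i)
  rw [Finset.sum_sub_distrib, Finset.sum_sub_distrib, ← Finset.sum_mul, ← Finset.mul_sum,
    ← Finset.mul_sum, hq1, ← hm] at this
  linarith

/-- Descent lemma for the MR-GD iterates (Lemma 1 of the paper).
For β-smooth differentiable losses and MR-GD iterates with gradient step size
α = 1/β and MW step size η > 0, the weighted loss decreases by at least
(1/(2β)) times the squared norm of the weighted gradient. -/
theorem mr_gd_descent_lemma
    {N d : ℕ} (hN : 1 ≤ N) (hd : 1 ≤ d)
    (l : Fin N → EuclideanSpace ℝ (Fin d) → ℝ)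
    (β η : ℝ) (hβ : 0 < β) (hη : 0 < η)
    (hdiff : ∀ i, Differentiable ℝ (l i))
    (hsmooth : ∀ i, ∀ x y : EuclideanSpace ℝ (Fin d),
      ‖gradient (l i) x - gradient (l i) y‖ ≤ β * ‖x - y‖)
    (θ : ℕ → EuclideanSpace ℝ (Fin d)) (p : ℕ → Fin N → ℝ)
    (hp0 : ∀ i, p 0 i = 1 / N)
    (hθ : ∀ t, θ (t + 1) = θ t - (1 / β) • ∑ i, p t i • gradient (l i) (θ t))
    (hp : ∀ t i, p (t + 1) i =
      Real.exp (-η * ∑ s ∈ Finset.Icc 1 (t + 1), l i (θ s)) /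
        ∑ j, Real.exp (-η * ∑ s ∈ Finset.Icc 1 (t + 1), l j (θ s)))
    (t : ℕ) :
    (∑ i, p (t + 1) i * l i (θ (t + 1))) - ∑ i, p t i * l i (θ t) ≤
      -(1 / (2 * β)) * ‖∑ i, p t i • gradient (l i) (θ t)‖ ^ 2 := by
  have hne : Nonempty (Fin N) := ⟨⟨0, hN⟩⟩
  set w : ℕ → Fin N → ℝ := fun t i => Real.exp (-η * ∑ s ∈ Finset.Icc 1 t, l i (θ s)) with hw
  have hwpos : ∀ t i, 0 < w t i := fun t i => Real.exp_pos _
  have hWpos : ∀ t, 0 < ∑ j, w t j := fun t =>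
    Finset.sum_pos (fun j _ => hwpos t j) Finset.univ_nonempty
  have hpw : ∀ t i, p t i = w t i / ∑ j, w t j := by
    intro t i
    cases t with
    | zero => simp [hw, hp0]
    | succ t => exact hp t i
  have hq : ∀ i, 0 ≤ p t i := fun i => by
    rw [hpw]; exact (div_pos (hwpos t i) (hWpos t)).le
  have hq1 : ∑ i, p t i = 1 := by
    simp_rw [hpw]
    rw [← Finset.sum_div, div_self (hWpos t).ne']
  set a : Fin N → ℝ := fun i => l i (θ (t + 1)) with ha
  have hstep : ∀ i, w (t + 1) i = (∑ j, w t j) * (p t i * Real.exp (-η * a i)) := by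
    intro i
    rw [hpw, ← mul_assoc, mul_div_cancel₀ _ (hWpos t).ne']
    simp only [hw, ha]
    rw [Finset.sum_Icc_succ_top (by omega), mul_add, Real.exp_add]
  have h1 : ∑ i, p (t + 1) i * l i (θ (t + 1)) ≤ ∑ i, p t i * a i := by
    have e : ∑ i, p (t + 1) i * l i (θ (t + 1))
        = (∑ i, w (t + 1) i * a i) / ∑ j, w (t + 1) j := by
      rw [Finset.sum_div]
      refine Finset.sum_congr rfl fun i _ => ?_
      rw [hpw]; ring
    rw [e, div_le_iff₀ (hWpos (t + 1))]
    simp_rw [hstep, mul_assoc (∑ j, w t j)]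
    rw [← Finset.mul_sum, ← Finset.mul_sum]
    have := mul_le_mul_of_nonneg_left (reweight (p t) a η hη hq hq1) (hWpos t).le
    linarith
  set G := ∑ i, p t i • gradient (l i) (θ t) with hG
  have h2 : ∑ i, p t i * a i ≤ ∑ i, p t i * l i (θ t) - 1 / (2 * β) * ‖G‖ ^ 2 := by
    have hle : ∀ i, p t i * a i ≤ p t i * l i (θ t)
        + inner ℝ (p t i • gradient (l i) (θ t)) (-((1 / β) • G))
        + p t i * (β / 2 * ‖-((1 / β) • G)‖ ^ 2) := by
      intro i
      have := quad_upper (l i) β (hdiff i) (hsmooth i) (θ t) (-((1 / β) • G))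
      rw [← sub_eq_add_neg, ← hθ t] at this
      have := mul_le_mul_of_nonneg_left this (hq i)
      rw [real_inner_smul_left]
      simp only [ha]
      linarith
    have := Finset.sum_le_sum (fun i (_ : i ∈ Finset.univ) => hle i)
    rw [Finset.sum_add_distrib, Finset.sum_add_distrib, ← sum_inner, ← hG, ← Finset.sum_mul,
      hq1, inner_neg_right, real_inner_smul_right, real_inner_self_eq_norm_sq, norm_neg,
      norm_smul, Real.norm_eq_abs, abs_of_pos (by positivity : 0 < 1 / β)] at this
    refine this.trans (le_of_eq ?_)
    field_simp
    ring
  linarith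
end

section
/- Let N ≥ 1, η > 0, and let L, ℓ ∈ ℝ^N be vectors. Define the exponential-weights distributions p_i = exp(−η L_i) / Σ_{j=1}^N exp(−η L_j) and q_i = exp(−η (L_i + ℓ_i)) / Σ_{j=1}^N exp(−η (L_j + ℓ_j)). Then Σ_{i=1}^N q_i ℓ_i ≤ Σ_{i=1}^N p_i ℓ_i. (This is the key FTRL-optimality inequality showing the multiplicative-weights update cannot increase the weighted value of the most recent loss vector.) -/
open Real Finset

/-- FTRL-optimality inequality for the exponential-weights update:
updating the exponential-weights distribution with the most recent loss vector
cannot increase the weighted value of that loss vector. -/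
theorem exp_weights_ftrl_optimality
    {N : ℕ} (hN : 1 ≤ N) (η : ℝ) (hη : 0 < η)
    (L ℓ : Fin N → ℝ) (p q : Fin N → ℝ)
    (hp : ∀ i, p i = Real.exp (-η * L i) / ∑ j, Real.exp (-η * L j))
    (hq : ∀ i, q i = Real.exp (-η * (L i + ℓ i)) / ∑ j, Real.exp (-η * (L j + ℓ j))) :
    ∑ i, q i * ℓ i ≤ ∑ i, p i * ℓ i := by
  haveI : Nonempty (Fin N) := ⟨⟨0, hN⟩⟩
  have hP : 0 < ∑ j, Real.exp (-η * L j) :=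
    Finset.sum_pos (fun j _ => Real.exp_pos _) Finset.univ_nonempty
  have hQ : 0 < ∑ j, Real.exp (-η * (L j + ℓ j)) :=
    Finset.sum_pos (fun j _ => Real.exp_pos _) Finset.univ_nonempty
  obtain ⟨m, hm⟩ : ∃ m, m = ∑ i, p i * ℓ i := ⟨_, rfl⟩
  have hm' : m * ∑ j, Real.exp (-η * L j) = ∑ i, Real.exp (-η * L i) * ℓ i := by
    rw [hm, Finset.sum_mul]
    refine Finset.sum_congr rfl fun i _ => ?_
    rw [hp i]
    field_simp
  have hq' : ∑ i, q i * ℓ i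
      = (∑ i, Real.exp (-η * (L i + ℓ i)) * ℓ i) / ∑ j, Real.exp (-η * (L j + ℓ j)) := by
    rw [Finset.sum_div]
    refine Finset.sum_congr rfl fun i _ => ?_
    rw [hq i]
    ring
  rw [← hm, hq', div_le_iff₀ hQ]
  have key : ∀ i, Real.exp (-η * (L i + ℓ i)) * (ℓ i - m)
      ≤ Real.exp (-η * m) * (Real.exp (-η * L i) * (ℓ i - m)) := by
    intro i
    have h1 : Real.exp (-η * (L i + ℓ i)) = Real.exp (-η * L i) * Real.exp (-η * ℓ i) := by
      rw [← Real.exp_add]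
      ring_nf
    have h2 : Real.exp (-η * ℓ i) * (ℓ i - m) ≤ Real.exp (-η * m) * (ℓ i - m) := by
      rcases le_total m (ℓ i) with h | h
      · exact mul_le_mul_of_nonneg_right (Real.exp_le_exp.2 (by nlinarith)) (by linarith)
      · exact mul_le_mul_of_nonpos_right (Real.exp_le_exp.2 (by nlinarith)) (by linarith)
    have h3 := mul_le_mul_of_nonneg_left h2 (Real.exp_pos (-η * L i)).le
    rw [h1]
    linarith
  have hs := Finset.sum_le_sum fun i (_ : i ∈ Finset.univ) => key i
  rw [← Finset.mul_sum] at hs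
  simp only [mul_sub, Finset.sum_sub_distrib, ← Finset.sum_mul] at hs
  rw [← hm'] at hs
  linarith
end

section
/- Let l_1, …, l_N : ℝ^d → ℝ be differentiable and β-smooth (β > 0), let η > 0, and let (θ_t, p_t) be the MR-GD iterates with gradient step size α = 1/β. Suppose (p*, θ*) minimizes Σ_{i=1}^N p_i l_i(θ) over all probability vectors p in the N-simplex and all θ ∈ ℝ^d. Then for every T ≥ 1, (1/T) Σ_{t=0}^{T−1} ‖Σ_{i=1}^N p_{t,i} ∇l_i(θ_t)‖² ≤ (2β/T) ( (1/N) Σ_{i=1}^N l_i(θ_0) − Σ_{i=1}^N p*_i l_i(θ*) ). -/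
open Real Finset

lemma descent_aux {E : Type*} [NormedAddCommGroup E] [InnerProductSpace ℝ E] [CompleteSpace E]
    (f : E → ℝ) (β : ℝ) (hf : Differentiable ℝ f)
    (hs : ∀ x y, ‖gradient f x - gradient f y‖ ≤ β * ‖x - y‖) (x v : E) :
    f (x + v) ≤ f x + inner ℝ (gradient f x) v + β / 2 * ‖v‖ ^ 2 := by
  have hd : ∀ s : ℝ, HasDerivAt
      (fun s : ℝ => f (x + s • v) - s * inner ℝ (gradient f x) v - β / 2 * s ^ 2 * ‖v‖ ^ 2)
      (inner ℝ (gradient f (x + s • v)) v - inner ℝ (gradient f x) v - β * s * ‖v‖ ^ 2) s := by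
    intro s
    have h1 : HasDerivAt (fun s : ℝ => x + s • v) v s := by
      simpa using ((hasDerivAt_id s).smul_const v).const_add x
    have h2 := (hf (x + s • v)).hasGradientAt.hasFDerivAt.comp_hasDerivAt s h1
    have h3 := (hasDerivAt_id s).mul_const (inner ℝ (gradient f x) v)
    have h4 := (((hasDerivAt_id s).pow 2).const_mul (β / 2)).mul_const (‖v‖ ^ 2)
    have h5 := (h2.sub h3).sub h4
    refine HasDerivAt.congr_deriv (f := fun s : ℝ =>
      f (x + s • v) - s * inner ℝ (gradient f x) v - β / 2 * s ^ 2 * ‖v‖ ^ 2) h5 ?_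
    simp
    left
    ring
  have ha : AntitoneOn
      (fun s : ℝ => f (x + s • v) - s * inner ℝ (gradient f x) v - β / 2 * s ^ 2 * ‖v‖ ^ 2)
      (Set.Icc 0 1) := by
    apply antitoneOn_of_deriv_nonpos (convex_Icc 0 1)
    · exact fun s _ => (hd s).continuousAt.continuousWithinAt
    · exact fun s _ => (hd s).differentiableAt.differentiableWithinAt
    · intro s h
      rw [interior_Icc] at h
      rw [(hd s).deriv, ← inner_sub_left]
      have h1 := real_inner_le_norm (gradient f (x + s • v) - gradient f x) v
      have h2 := hs (x + s • v) x
      rw [add_sub_cancel_left, norm_smul, Real.norm_of_nonneg h.1.le] at h2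
      nlinarith [mul_le_mul_of_nonneg_right h2 (norm_nonneg v)]
  have := ha (Set.left_mem_Icc.2 zero_le_one) (Set.right_mem_Icc.2 zero_le_one) zero_le_one
  simp only [one_smul, zero_smul, add_zero] at this
  linarith

lemma mw_aux {ι : Type*} [Fintype ι] (η : ℝ) (hη : 0 < η) (q q' a : ι → ℝ)
    (hq : ∀ i, 0 ≤ q i) (hs : ∑ i, q i = 1) (C : ℝ) (hC : 0 < C)
    (h : ∀ i, q' i = q i * Real.exp (-η * a i) * C) (hs' : ∑ i, q' i = 1) :
    ∑ i, q' i * a i ≤ ∑ i, q i * a i := by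
  set m := ∑ i, q i * a i with hm
  have key : ∀ i, q' i * (a i - m) ≤ C * Real.exp (-η * m) * (q i * (a i - m)) := by
    intro i
    have : (a i - m) * (Real.exp (-η * a i) - Real.exp (-η * m)) ≤ 0 := by
      rcases le_total (a i) m with h1 | h1
      · exact mul_nonpos_of_nonpos_of_nonneg (by linarith)
          (sub_nonneg.2 (Real.exp_le_exp.2 (by nlinarith)))
      · exact mul_nonpos_of_nonneg_of_nonpos (by linarith)
          (sub_nonpos.2 (Real.exp_le_exp.2 (by nlinarith)))
    rw [h i]
    nlinarith [mul_nonneg (mul_nonneg (hq i) hC.le) (neg_nonneg.2 this)]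
  have h1 := Finset.sum_le_sum (fun i (_ : i ∈ Finset.univ) => key i)
  rw [← Finset.mul_sum] at h1
  simp only [mul_sub, Finset.sum_sub_distrib, ← Finset.sum_mul, hs, hs', ← hm] at h1
  linarith


/-- Convergence of MR-GD (Theorem 1 of the paper).
The time average of the squared norms of the weighted gradients of the MR-GD
iterates is bounded by (2β/T)((1/N)Σ l_i(θ_0) − Σ p*_i l_i(θ*)), where
(p*, θ*) minimizes the weighted loss over the simplex and ℝ^d. -/
theorem mr_gd_convergence
    {N d : ℕ} (hN : 1 ≤ N) (hd : 1 ≤ d)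
    (l : Fin N → EuclideanSpace ℝ (Fin d) → ℝ)
    (β η : ℝ) (hβ : 0 < β) (hη : 0 < η)
    (hdiff : ∀ i, Differentiable ℝ (l i))
    (hsmooth : ∀ i, ∀ x y : EuclideanSpace ℝ (Fin d),
      ‖gradient (l i) x - gradient (l i) y‖ ≤ β * ‖x - y‖)
    (θ : ℕ → EuclideanSpace ℝ (Fin d)) (p : ℕ → Fin N → ℝ)
    (hp0 : ∀ i, p 0 i = 1 / N)
    (hθ : ∀ t, θ (t + 1) = θ t - (1 / β) • ∑ i, p t i • gradient (l i) (θ t))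
    (hp : ∀ t i, p (t + 1) i =
      Real.exp (-η * ∑ s ∈ Finset.Icc 1 (t + 1), l i (θ s)) /
        ∑ j, Real.exp (-η * ∑ s ∈ Finset.Icc 1 (t + 1), l j (θ s)))
    (pstar : Fin N → ℝ) (θstar : EuclideanSpace ℝ (Fin d))
    (hpstar_nonneg : ∀ i, 0 ≤ pstar i) (hpstar_sum : ∑ i, pstar i = 1)
    (hmin : ∀ (q : Fin N → ℝ) (ϑ : EuclideanSpace ℝ (Fin d)),
      (∀ i, 0 ≤ q i) → (∑ i, q i = 1) →
      ∑ i, pstar i * l i θstar ≤ ∑ i, q i * l i ϑ)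
    (T : ℕ) (hT : 1 ≤ T) :
    (1 / (T : ℝ)) * ∑ t ∈ Finset.range T, ‖∑ i, p t i • gradient (l i) (θ t)‖ ^ 2 ≤
      (2 * β / T) * ((1 / N) * ∑ i, l i (θ 0) - ∑ i, pstar i * l i θstar) := by
  haveI : Nonempty (Fin N) := ⟨⟨0, hN⟩⟩
  have hNpos : (0 : ℝ) < N := by exact_mod_cast hN
  set Z : ℕ → ℝ := fun t => ∑ j, Real.exp (-η * ∑ s ∈ Finset.Icc 1 t, l j (θ s)) with hZ
  have hZpos : ∀ t, 0 < Z t := fun t =>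
    Finset.sum_pos (fun i _ => Real.exp_pos _) Finset.univ_nonempty
  have hpf : ∀ t i, p t i = Real.exp (-η * ∑ s ∈ Finset.Icc 1 t, l i (θ s)) / Z t := by
    intro t i
    cases t with
    | zero => simp [hp0, hZ]
    | succ t => exact hp t i
  have hpn : ∀ t i, 0 ≤ p t i := fun t i => by
    rw [hpf]; exact div_nonneg (Real.exp_pos _).le (hZpos t).le
  have hps : ∀ t, ∑ i, p t i = 1 := fun t => by
    simp only [hpf]
    rw [← Finset.sum_div]
    exact div_self (hZpos t).ne'
  have hmw : ∀ t, ∑ i, p (t + 1) i * l i (θ (t + 1)) ≤ ∑ i, p t i * l i (θ (t + 1)) := by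
    intro t
    refine mw_aux η hη (p t) (p (t + 1)) _ (hpn t) (hps t) (Z t / Z (t + 1))
      (div_pos (hZpos _) (hZpos _)) (fun i => ?_) (hps _)
    rw [hpf, hpf, Finset.sum_Icc_succ_top (by omega), mul_add, Real.exp_add]
    have := (hZpos t).ne'
    have := (hZpos (t + 1)).ne'
    field_simp
  have hstep : ∀ t, ‖∑ i, p t i • gradient (l i) (θ t)‖ ^ 2 ≤
      2 * β * (∑ i, p t i * l i (θ t) - ∑ i, p (t + 1) i * l i (θ (t + 1))) := by
    intro t
    set g := ∑ i, p t i • gradient (l i) (θ t) with hg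
    have h1 : ∑ i, p t i * l i (θ (t + 1)) ≤ ∑ i, p t i * (l i (θ t) +
        inner ℝ (gradient (l i) (θ t)) (-((1 / β) • g)) + β / 2 * ‖-((1 / β) • g)‖ ^ 2) := by
      refine Finset.sum_le_sum fun i _ => mul_le_mul_of_nonneg_left ?_ (hpn t i)
      have := descent_aux (l i) β (hdiff i) (hsmooth i) (θ t) (-((1 / β) • g))
      rwa [← sub_eq_add_neg, ← hθ t] at this
    have h2 : ∑ i, p t i * inner ℝ (gradient (l i) (θ t)) (-((1 / β) • g))
        = -(1 / β * ‖g‖ ^ 2) := by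
      simp only [← real_inner_smul_left]
      rw [← sum_inner, ← hg, inner_neg_right, real_inner_smul_right, real_inner_self_eq_norm_sq]
    simp only [mul_add, Finset.sum_add_distrib, ← Finset.sum_mul, hps, h2] at h1
    rw [norm_neg, norm_smul, Real.norm_of_nonneg (by positivity)] at h1
    have h3 := hmw t
    have h4 : 1 * (β / 2 * (1 / β * ‖g‖) ^ 2) = 1 / β * ‖g‖ ^ 2 / 2 := by
      field_simp
    rw [h4] at h1
    have h5 : 1 / β * ‖g‖ ^ 2 ≤
        2 * (∑ i, p t i * l i (θ t) - ∑ i, p (t + 1) i * l i (θ (t + 1))) := by linarith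
    have h6 := mul_le_mul_of_nonneg_left h5 hβ.le
    have h7 : β * (1 / β * ‖g‖ ^ 2) = ‖g‖ ^ 2 := by field_simp
    linarith
  have hsum := Finset.sum_le_sum (fun t (_ : t ∈ Finset.range T) => hstep t)
  rw [← Finset.mul_sum, Finset.sum_range_sub'] at hsum
  have h0 : ∑ i, p 0 i * l i (θ 0) = (1 / N) * ∑ i, l i (θ 0) := by
    simp only [hp0, Finset.mul_sum]
  rw [h0] at hsum
  have hm := hmin (p T) (θ T) (hpn T) (hps T)
  have hfin : ∑ t ∈ Finset.range T, ‖∑ i, p t i • gradient (l i) (θ t)‖ ^ 2 ≤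
      2 * β * ((1 / N) * ∑ i, l i (θ 0) - ∑ i, pstar i * l i θstar) :=
    hsum.trans (mul_le_mul_of_nonneg_left (by linarith) (by positivity))
  calc _ ≤ (1 / (T : ℝ)) * (2 * β * ((1 / N) * ∑ i, l i (θ 0) - ∑ i, pstar i * l i θstar)) :=
        mul_le_mul_of_nonneg_left hfin (by positivity)
    _ = _ := by ring
end

section
/- Consider gradient descent on the one-dimensional clean logistic loss L(θ) = log(1 + exp(−θ)) with step size α > 0 starting from θ_0 = 0, i.e., θ_{t+1} = θ_t + α/(1 + exp(θ_t)). Then for every ε > 0 there exists a natural number t with t > −log(exp(ε) − 1) / (α exp(−ε)(exp(ε) − 1)) such that L(θ_t) = log(1 + exp(−θ_t)) ≤ ε. -/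
open Real

/-- GD on the clean 1D logistic loss L(θ) = log(1 + exp(−θ))
with step size α > 0 starting from θ₀ = 0: for every ε > 0 there is a time
t > −log(exp(ε) − 1)/(α exp(−ε)(exp(ε) − 1)) with L(θ_t) ≤ ε. -/
theorem gd_clean_logistic
    (α : ℝ) (hα : 0 < α) (θ : ℕ → ℝ)
    (hθ0 : θ 0 = 0)
    (hθ : ∀ t, θ (t + 1) = θ t + α / (1 + Real.exp (θ t))) :
    ∀ ε > 0, ∃ t : ℕ,
      (t : ℝ) > -Real.log (Real.exp ε - 1) / (α * Real.exp (-ε) * (Real.exp ε - 1)) ∧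
      Real.log (1 + Real.exp (-θ t)) ≤ ε := by
  intro ε hε
  have hy : 0 < Real.exp ε - 1 := by
    have := Real.add_one_lt_exp hε.ne'
    linarith
  set M := -Real.log (Real.exp ε - 1) with hM
  set c := α * Real.exp (-ε) * (Real.exp ε - 1) with hc
  have hcpos : 0 < c := by positivity
  have heM : Real.exp M = (Real.exp ε - 1)⁻¹ := by
    rw [hM, Real.exp_neg, Real.exp_log hy]
  have hcM : c = α / (1 + Real.exp M) := by
    have h1 := Real.exp_pos ε
    have h2 : 1 + (Real.exp ε - 1)⁻¹ = Real.exp ε / (Real.exp ε - 1) := by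
      field_simp
      ring
    rw [heM, h2, hc, Real.exp_neg]
    field_simp
  have key : ∀ t : ℕ, M ≤ θ t ∨ (t : ℝ) * c ≤ θ t := by
    intro t
    induction t with
    | zero => right; simp [hθ0]
    | succ t ih =>
      have hinc : 0 < α / (1 + Real.exp (θ t)) := by positivity
      rcases le_or_gt M (θ t) with h | h
      · left; rw [hθ]; linarith
      · right
        have h3 : (t : ℝ) * c ≤ θ t := ih.resolve_left (not_le.mpr h)
        have h4 : c ≤ α / (1 + Real.exp (θ t)) := by
          rw [hcM]
          gcongr
        rw [hθ]; push_cast; linarith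
  obtain ⟨t, ht⟩ := exists_nat_gt (M / c)
  refine ⟨t, ht, ?_⟩
  have hMt : M ≤ θ t := by
    rcases key t with h | h
    · exact h
    · have := (div_lt_iff₀ hcpos).mp ht
      linarith
  rw [Real.log_le_iff_le_exp (by positivity)]
  have h5 : Real.exp (-θ t) ≤ Real.exp (-M) := Real.exp_le_exp.mpr (by linarith)
  have h6 : Real.exp (-M) = Real.exp ε - 1 := by
    rw [hM, neg_neg, Real.exp_log hy]
  linarith
end

section
/- In the noisy logistic MR-GD dynamics with step sizes η = α = 1 and θ_0 = 0, the iterates are strictly increasing: θ_{t+1} > θ_t for every t ≥ 0. -/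
open Real Finset

/-- In the noisy logistic MR-GD dynamics (step sizes η = α = 1,
θ₀ = 0, corruption fraction σ = 1/2 − Δ with 0 < Δ < 1/2), the iterates are
strictly increasing: θ_{t+1} > θ_t for all t (Lemma 4 of the paper). -/
theorem mr_gd_noisy_logistic_increasing
    (Δ : ℝ) (hΔ0 : 0 < Δ) (hΔ : Δ < 1 / 2)
    (σ : ℝ) (hσ : σ = 1 / 2 - Δ)
    (N : ℕ) (hN : 1 ≤ N) (hσN : ∃ m : ℕ, 0 < m ∧ (m : ℝ) = σ * N)
    (θ a b : ℕ → ℝ)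
    (ha : ∀ t, a t = Real.exp (-(1 : ℝ) * ∑ s ∈ Finset.Icc 1 t, Real.log (1 + Real.exp (-θ s))))
    (hb : ∀ t, b t = Real.exp (-(1 : ℝ) * ∑ s ∈ Finset.Icc 1 t, Real.log (1 + Real.exp (θ s))))
    (hθ0 : θ 0 = 0)
    (hθ : ∀ t, θ (t + 1) = θ t +
      (1 : ℝ) * (((1 - σ) * a t / ((1 - σ) * a t + σ * b t)) / (1 + Real.exp (θ t)) -
        (σ * b t / ((1 - σ) * a t + σ * b t)) / (1 + Real.exp (-θ t)))) :
    ∀ t : ℕ, θ t < θ (t + 1) := by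
  have hσ1 : σ < 1 / 2 := by linarith
  have hσ0 : 0 < σ := by linarith
  have hapos : ∀ t, 0 < a t := fun t => by rw [ha]; exact Real.exp_pos _
  have hbpos : ∀ t, 0 < b t := fun t => by rw [hb]; exact Real.exp_pos _
  have ha1 : ∀ t, a (t + 1) = a t / (1 + Real.exp (-θ (t + 1))) := fun t => by
    rw [ha, ha, Finset.sum_Icc_succ_top (by omega), mul_add, Real.exp_add, neg_one_mul (Real.log _),
      Real.exp_neg (Real.log _), Real.exp_log (by positivity), div_eq_mul_inv]
  have hb1 : ∀ t, b (t + 1) = b t / (1 + Real.exp (θ (t + 1))) := fun t => by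
    rw [hb, hb, Finset.sum_Icc_succ_top (by omega), mul_add, Real.exp_add, neg_one_mul (Real.log _),
      Real.exp_neg (Real.log _), Real.exp_log (by positivity), div_eq_mul_inv]
  -- one step: if the clean weight dominates, then the iterate increases
  have step : ∀ t, b t * Real.exp (θ t) ≤ a t → θ t < θ (t + 1) := by
    intro t h
    have hA := hapos t
    have hB := hbpos t
    have hE := Real.exp_pos (θ t)
    have hD : 0 < (1 - σ) * a t + σ * b t :=
      add_pos (mul_pos (by linarith) hA) (mul_pos hσ0 hB)
    have key : ((1 - σ) * a t / ((1 - σ) * a t + σ * b t)) / (1 + Real.exp (θ t)) -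
        (σ * b t / ((1 - σ) * a t + σ * b t)) / (1 + Real.exp (-θ t)) =
        ((1 - σ) * a t - σ * (b t * Real.exp (θ t))) /
          (((1 - σ) * a t + σ * b t) * (1 + Real.exp (θ t))) := by
      rw [Real.exp_neg]
      have h1 : 1 + Real.exp (θ t) ≠ 0 := by positivity
      have h2 : 1 + (Real.exp (θ t))⁻¹ = (1 + Real.exp (θ t)) / Real.exp (θ t) := by
        field_simp
        ring
      rw [h2]
      have h3 := hD.ne'
      generalize (1 - σ) * a t + σ * b t = D at *
      field_simp
    have hpos : 0 < ((1 - σ) * a t - σ * (b t * Real.exp (θ t))) /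
          (((1 - σ) * a t + σ * b t) * (1 + Real.exp (θ t))) := by
      apply div_pos _ (by positivity)
      nlinarith [mul_le_mul_of_nonneg_left h hσ0.le]
    rw [hθ t, key]
    linarith
  have inv : ∀ t, 0 ≤ θ t ∧ b t * Real.exp (θ t) ≤ a t := by
    intro t
    induction t with
    | zero => simp [hθ0, ha, hb]
    | succ t ih =>
      have hlt := step t ih.2
      refine ⟨by linarith [ih.1], ?_⟩
      have hba : b t ≤ a t :=
        le_trans (le_mul_of_one_le_right (hbpos t).le (Real.one_le_exp ih.1)) ih.2
      have hE := Real.exp_pos (θ (t + 1))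
      have e : b (t + 1) * Real.exp (θ (t + 1)) = b t / (1 + Real.exp (-θ (t + 1))) := by
        rw [hb1, Real.exp_neg]
        field_simp
        try ring
      rw [e, ha1]
      gcongr
  exact fun t => step t (inv t).2
end

section
/- In the noisy logistic MR-GD dynamics with step sizes η = α = 1 and θ_0 = 0, for every ε > 0 there exists a natural number t with t ≥ max{ −log(1/2)/Δ + 2, ( −log(exp(ε) − 1) / (exp(−ε)(exp(ε) − 1)) ) · (2N/σ) } such that the clean loss satisfies L(θ_t) = log(1 + exp(−θ_t)) ≤ ε. -/
open Real Finset

/-- In the noisy logistic MR-GD dynamics (step sizes η = α = 1,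
θ₀ = 0, corruption fraction σ = 1/2 − Δ with 0 < Δ < 1/2), for every ε > 0
there is a time t ≥ max{−log(1/2)/Δ + 2, (−log(exp(ε) − 1)/(exp(−ε)(exp(ε) − 1))) · (2N/σ)}
at which the clean loss L(θ_t) = log(1 + exp(−θ_t)) is at most ε
(Theorem 3 of the paper). -/
theorem mr_gd_noisy_logistic_clean_loss
    (Δ : ℝ) (hΔ0 : 0 < Δ) (hΔ : Δ < 1 / 2)
    (σ : ℝ) (hσ : σ = 1 / 2 - Δ)
    (N : ℕ) (hN : 1 ≤ N) (hσN : ∃ m : ℕ, 0 < m ∧ (m : ℝ) = σ * N)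
    (θ a b : ℕ → ℝ)
    (ha : ∀ t, a t = Real.exp (-(1 : ℝ) * ∑ s ∈ Finset.Icc 1 t, Real.log (1 + Real.exp (-θ s))))
    (hb : ∀ t, b t = Real.exp (-(1 : ℝ) * ∑ s ∈ Finset.Icc 1 t, Real.log (1 + Real.exp (θ s))))
    (hθ0 : θ 0 = 0)
    (hθ : ∀ t, θ (t + 1) = θ t +
      (1 : ℝ) * (((1 - σ) * a t / ((1 - σ) * a t + σ * b t)) / (1 + Real.exp (θ t)) -
        (σ * b t / ((1 - σ) * a t + σ * b t)) / (1 + Real.exp (-θ t)))) :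
    ∀ ε > (0 : ℝ), ∃ t : ℕ,
      (t : ℝ) ≥ max (-Real.log (1 / 2) / Δ + 2)
        ((-Real.log (Real.exp ε - 1) / (Real.exp (-ε) * (Real.exp ε - 1))) * (2 * N / σ)) ∧
      Real.log (1 + Real.exp (-θ t)) ≤ ε := by
  have hσ0 : 0 < σ := by linarith
  have hba : ∀ t, b t = a t * Real.exp (-∑ s ∈ Finset.Icc 1 t, θ s) := by
    intro t
    rw [ha, hb, ← Real.exp_add]
    congr 1
    have : ∀ x : ℝ, Real.log (1 + Real.exp x) = Real.log (1 + Real.exp (-x)) + x := by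
      intro x
      have h1 : 1 + Real.exp x = (1 + Real.exp (-x)) * Real.exp x := by
        rw [add_mul, ← Real.exp_add]; simp [add_comm]
      rw [h1, Real.log_mul (by positivity) (by positivity), Real.log_exp]
    rw [Finset.sum_congr rfl (fun s _ => this (θ s)), Finset.sum_add_distrib]
    ring
  have hapos : ∀ t, 0 < a t := fun t => by rw [ha]; positivity
  have step : ∀ t, 0 ≤ θ t → θ t ≤ ∑ s ∈ Finset.Icc 1 t, θ s →
      θ t + 2 * Δ / (1 + Real.exp (θ t)) ≤ θ (t + 1) := by
    intro t h0 h1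
    have hap := hapos t
    have hE : 0 < Real.exp (θ t) := Real.exp_pos _
    have hbp : 0 < b t := by rw [hb]; positivity
    have hle1 : b t * Real.exp (θ t) ≤ a t := by
      rw [hba, mul_assoc, ← Real.exp_add]
      have : Real.exp (-∑ s ∈ Finset.Icc 1 t, θ s + θ t) ≤ 1 := Real.exp_le_one_iff.2 (by linarith)
      nlinarith
    have hE1 : 1 ≤ Real.exp (θ t) := Real.one_le_exp h0
    have hle2 : b t ≤ a t := by nlinarith
    have hD : 0 < (1 - σ) * a t + σ * b t := by
      have : 0 < (1 - σ) * a t := mul_pos (by linarith) hap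
      positivity
    have hD1 : (1 - σ) * a t + σ * b t ≤ a t := by nlinarith
    have hinc : ((1 - σ) * a t / ((1 - σ) * a t + σ * b t)) / (1 + Real.exp (θ t)) -
        (σ * b t / ((1 - σ) * a t + σ * b t)) / (1 + Real.exp (-θ t)) =
        (((1 - σ) * a t - σ * (b t * Real.exp (θ t))) / ((1 - σ) * a t + σ * b t))
          / (1 + Real.exp (θ t)) := by
      rw [Real.exp_neg]
      generalize (1 - σ) * a t + σ * b t = D at *
      field_simp
      ring
    rw [hθ t, hinc, one_mul]
    gcongr
    rw [le_div_iff₀ hD]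
    nlinarith
  have inv : ∀ t, 0 ≤ θ t ∧ θ t ≤ ∑ s ∈ Finset.Icc 1 t, θ s := by
    intro t
    induction t with
    | zero => simp [hθ0]
    | succ k ih =>
      have h := step k ih.1 ih.2
      have hp : 0 < 2 * Δ / (1 + Real.exp (θ k)) := by positivity
      refine ⟨by linarith [ih.1], ?_⟩
      rw [Finset.sum_Icc_succ_top (by omega)]
      linarith [ih.1, ih.2]
  intro ε hε
  obtain ⟨T, hT⟩ := exists_nat_ge (max (-Real.log (1 / 2) / Δ + 2)
        ((-Real.log (Real.exp ε - 1) / (Real.exp (-ε) * (Real.exp ε - 1))) * (2 * N / σ)))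
  have hε1 : 0 < Real.exp ε - 1 := by linarith [Real.add_one_lt_exp hε.ne']
  have key : ∃ n : ℕ, -Real.log (Real.exp ε - 1) ≤ θ (T + n) := by
    by_contra! hcon
    set M := -Real.log (Real.exp ε - 1)
    have hc : 0 < 2 * Δ / (1 + Real.exp M) := by positivity
    have hlin : ∀ n : ℕ, n * (2 * Δ / (1 + Real.exp M)) ≤ θ (T + n) := by
      intro n
      induction n with
      | zero => simpa using (inv T).1
      | succ k ih =>
        have h := step (T + k) (inv _).1 (inv _).2
        have : 2 * Δ / (1 + Real.exp M) ≤ 2 * Δ / (1 + Real.exp (θ (T + k))) := by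
          have := (hcon k).le
          gcongr
        rw [← add_assoc]
        push_cast
        linarith
    obtain ⟨n, hn⟩ := exists_nat_ge (M / (2 * Δ / (1 + Real.exp M)))
    rw [div_le_iff₀ hc] at hn
    linarith [hcon n, hlin n]
  obtain ⟨n, hn⟩ := key
  refine ⟨T + n, ?_, ?_⟩
  · push_cast
    have : (0 : ℝ) ≤ n := Nat.cast_nonneg n
    linarith
  · rw [Real.log_le_iff_le_exp (by positivity)]
    have : Real.exp (-θ (T + n)) ≤ Real.exp ε - 1 := by
      rw [← Real.le_log_iff_exp_le hε1]; linarith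
    linarith
end

section
/- In the noisy linear MR-LS dynamics, for every c > 0 there exists a natural number t with t > ln( ε / (c + 1 + Δ) ) / (η ε² Δ) such that |θ_t − 1| ≤ c, where θ* = 1 is the least-squares solution of the clean problem. -/
open Real Finset

/-- In the noisy linear MR-LS dynamics, for every c > 0 there is
a time t > ln(ε/(c + 1 + Δ))/(ηε²Δ) at which |θ_t − 1| ≤ c, where θ* = 1 is
the least-squares solution of the clean problem (Theorem 4 of the paper). -/
theorem mr_ls_converges_to_clean_solution
    (N : ℕ) (hN : 1 ≤ N)
    (ε Δ η : ℝ) (hε : 0 < ε) (hΔ0 : 0 < Δ) (hΔ : Δ < 1 / 2) (hη : 0 < η)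
    (σ : ℝ) (hσ : σ = 1 / 2 - Δ)
    (Icr : Finset (Fin N)) (hIcr_pos : 0 < Icr.card) (hIcr_card : (Icr.card : ℝ) = σ * N)
    (x y e : Fin N → ℝ)
    (hx : ∀ i, x i = 1 ∨ x i = -1) (hxy : ∀ i, y i = x i)
    (he_cr : ∀ i ∈ Icr, e i = ε ∨ e i = -ε) (he_cl : ∀ i ∉ Icr, e i = 0)
    (p : ℕ → Fin N → ℝ) (θ : ℕ → ℝ)
    (hp0 : ∀ i, p 0 i = 1 / N)
    (hθ : ∀ t, θ t = ∑ i, p t i * x i * (y i + e i))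
    (hp : ∀ t i, p (t + 1) i =
      Real.exp (-η * ∑ s ∈ Finset.range (t + 1), (1 / 2) * (θ s * x i - (y i + e i)) ^ 2) /
        ∑ j, Real.exp (-η * ∑ s ∈ Finset.range (t + 1), (1 / 2) * (θ s * x j - (y j + e j)) ^ 2))
    :
    ∀ c > (0 : ℝ), ∃ t : ℕ,
      (t : ℝ) > Real.log (ε / (c + 1 + Δ)) / (η * ε ^ 2 * Δ) ∧ |θ t - 1| ≤ c := by
  intro c hc
  have hNpos : (0:ℝ) < N := by exact_mod_cast hN
  have hσ0 : 0 < σ := by rw [hσ]; linarith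
  set u : ℕ → ℝ := fun t => θ t - 1 with hu
  set a : Fin N → ℝ := fun i => x i * e i with ha
  have hxx : ∀ i, x i * x i = 1 := by
    intro i; rcases hx i with h | h <;> rw [h] <;> norm_num
  set v : ℕ → Fin N → ℝ := fun t i =>
    Real.exp (-η * ∑ s ∈ Finset.range t, ((a i) ^ 2 / 2 - u s * a i)) with hv
  have hvpos : ∀ t i, 0 < v t i := fun t i => Real.exp_pos _
  have : Nonempty (Fin N) := ⟨⟨0, hN⟩⟩
  have hVpos : ∀ t, 0 < ∑ i, v t i := fun t =>
    Finset.sum_pos (fun i _ => hvpos t i) Finset.univ_nonempty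
  have hpv : ∀ t i, p t i = v t i / ∑ j, v t j := by
    intro t i
    cases t with
    | zero => simp [hp0, hv]
    | succ t =>
      have key : ∀ i, Real.exp (-η * ∑ s ∈ Finset.range (t + 1),
          (1 / 2) * (θ s * x i - (y i + e i)) ^ 2) =
          Real.exp (-η * ∑ s ∈ Finset.range (t + 1), (1 / 2) * (u s) ^ 2) * v (t + 1) i := by
        intro i
        simp only [hv]
        rw [← Real.exp_add, ← mul_add, ← Finset.sum_add_distrib]
        congr 2
        apply Finset.sum_congr rfl
        intro s _
        simp only [hu, ha, hxy]
        have h1 := hxx i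
        have h2 : x i ^ 2 = 1 := by rw [sq]; exact h1
        have h3 : (θ s * x i - (x i + e i)) ^ 2
          = x i ^ 2 * (θ s - 1) ^ 2 - 2 * (θ s - 1) * (x i * e i) + e i ^ 2 := by ring
        rw [h3, mul_pow, h2]; ring
      rw [hp, key i, Finset.sum_congr rfl (fun j _ => key j), ← Finset.mul_sum Finset.univ (v (t+1)),
        mul_div_mul_left _ _ (Real.exp_pos _).ne']
  have hpsum : ∀ t, ∑ i, p t i = 1 := by
    intro t
    simp only [hpv]
    rw [← Finset.sum_div, div_self (hVpos t).ne']
  have huv : ∀ t, u t = (∑ i, v t i * a i) / ∑ i, v t i := by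
    intro t
    have : θ t = ∑ i, (p t i + p t i * a i) := by
      rw [hθ]
      apply Finset.sum_congr rfl
      intro i _
      rw [hxy]
      simp only [ha]
      have h1 := hxx i
      linear_combination p t i * h1
    simp only [hu]
    rw [this, Finset.sum_add_distrib, hpsum, add_sub_cancel_left, Finset.sum_div]
    apply Finset.sum_congr rfl
    intro i _
    rw [hpv]; ring
  have ha0 : ∀ i ∉ Icr, a i = 0 := by
    intro i hi; simp [ha, he_cl i hi]
  have ha1 : ∀ i ∈ Icr, |a i| = ε := by
    intro i hi
    simp only [ha, abs_mul]
    rcases hx i with h | h <;> rcases he_cr i hi with h' | h' <;> simp [h, h', abs_of_pos hε]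
  have hsplit : ∀ t, ∑ i, v t i = (1 - σ) * N + ∑ i ∈ Icr, v t i := by
    intro t
    rw [← Finset.sum_compl_add_sum Icr]
    congr 1
    have : ∀ i ∈ Icrᶜ, v t i = 1 := by
      intro i hi
      simp [hv, ha0 i (Finset.mem_compl.1 hi)]
    rw [Finset.sum_congr rfl this, Finset.sum_const, nsmul_eq_mul, mul_one,
      Finset.card_compl, Nat.cast_sub (Finset.card_le_univ _), Fintype.card_fin, hIcr_card]
    ring
  have hnum : ∀ t, |∑ i, v t i * a i| ≤ ε * ∑ i ∈ Icr, v t i := by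
    intro t
    rw [← Finset.sum_compl_add_sum Icr]
    rw [Finset.sum_eq_zero (s := Icrᶜ) (fun i hi => by
      rw [ha0 i (Finset.mem_compl.1 hi), mul_zero]), zero_add]
    refine (Finset.abs_sum_le_sum_abs _ _).trans (le_of_eq ?_)
    rw [Finset.mul_sum]
    apply Finset.sum_congr rfl
    intro i hi
    rw [abs_mul, ha1 i hi, abs_of_pos (hvpos t i), mul_comm]
  have hV : ∀ t, (∀ s < t, |u s| ≤ ε * σ) →
      ∑ i ∈ Icr, v t i ≤ σ * N * Real.exp (-(η * ε ^ 2 * Δ)) ^ t := by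
    intro t ht
    rw [← hIcr_card, ← nsmul_eq_mul]
    apply Finset.sum_le_card_nsmul
    intro i hi
    rw [← Real.exp_nat_mul]
    simp only [hv]
    apply Real.exp_le_exp.2
    have h1 : ∑ s ∈ Finset.range t, (ε ^ 2 * Δ) ≤
        ∑ s ∈ Finset.range t, ((a i) ^ 2 / 2 - u s * a i) := by
      apply Finset.sum_le_sum
      intro s hs
      have h2 := ht s (Finset.mem_range.1 hs)
      have h3 : u s * a i ≤ ε * σ * ε := by
        refine (le_abs_self _).trans ?_
        rw [abs_mul, ha1 i hi]
        exact mul_le_mul_of_nonneg_right h2 hε.le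
      have h4 : a i ^ 2 = ε ^ 2 := by rw [← sq_abs, ha1 i hi]
      rw [h4]
      rw [hσ] at h3
      nlinarith
    rw [Finset.sum_const, Finset.card_range, nsmul_eq_mul] at h1
    nlinarith [mul_le_mul_of_nonneg_left h1 hη.le]
  have hq1 : Real.exp (-(η * ε ^ 2 * Δ)) < 1 := by
    rw [Real.exp_lt_one_iff]
    have : 0 < η * ε ^ 2 * Δ := by positivity
    linarith
  have hq0 := Real.exp_pos (-(η * ε ^ 2 * Δ))
  set q := Real.exp (-(η * ε ^ 2 * Δ)) with hq
  have hσ1 : 0 < 1 - σ := by rw [hσ]; linarith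
  have habs : ∀ t, |u t| ≤ ε * (∑ i ∈ Icr, v t i) / ∑ i, v t i := by
    intro t
    rw [huv, abs_div, abs_of_pos (hVpos t)]
    exact div_le_div_of_nonneg_right (hnum t) (hVpos t).le
  have hB : ∀ t, |u t| ≤ ε * σ := by
    intro t
    induction t using Nat.strong_induction_on with
    | _ t ih =>
      refine (habs t).trans ?_
      rw [div_le_iff₀ (hVpos t), hsplit, mul_assoc]
      apply mul_le_mul_of_nonneg_left _ hε.le
      have h1 := hV t ih
      have h2 : q ^ t ≤ 1 := pow_le_one₀ hq0.le hq1.le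
      have h3 : ∑ i ∈ Icr, v t i ≤ σ * N :=
        h1.trans (mul_le_of_le_one_right (by positivity) h2)
      nlinarith [mul_le_mul_of_nonneg_left h3 hσ1.le]
  have hdec : ∀ t, |u t| ≤ ε * q ^ t := by
    intro t
    refine (habs t).trans ?_
    rw [div_le_iff₀ (hVpos t), hsplit, mul_assoc]
    apply mul_le_mul_of_nonneg_left _ hε.le
    have h1 := hV t (fun s _ => hB s)
    have h2 : 0 < q ^ t := pow_pos hq0 t
    have h3 : 0 ≤ ∑ i ∈ Icr, v t i := Finset.sum_nonneg (fun i _ => (hvpos t i).le)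
    have h4 : σ * N ≤ (1 - σ) * N :=
      mul_le_mul_of_nonneg_right (by rw [hσ]; linarith) hNpos.le
    have h5 := mul_le_mul_of_nonneg_right h4 h2.le
    nlinarith [mul_nonneg h2.le h3]
  have hlim : Filter.Tendsto (fun t : ℕ => ε * q ^ t) Filter.atTop (nhds 0) := by
    simpa using (tendsto_pow_atTop_nhds_zero_of_lt_one hq0.le hq1).const_mul ε
  have hev := (hlim.eventually (gt_mem_nhds hc)).and
    ((tendsto_natCast_atTop_atTop (R := ℝ)).eventually_gt_atTop
      (Real.log (ε / (c + 1 + Δ)) / (η * ε ^ 2 * Δ)))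
  obtain ⟨t, h1, h2⟩ := hev.exists
  exact ⟨t, h2, (hdec t).trans h1.le⟩
end

section
/- In the noisy linear MR-LS dynamics, the iterates converge to the clean solution at an exponential rate: for every t ≥ 0, |θ_t − 1| ≤ ε · exp(−η ε² Δ t) / (1 + Δ). -/
open Real Finset

/-- In the noisy linear MR-LS dynamics the iterates converge to
the clean solution θ* = 1 at an exponential rate:
|θ_t − 1| ≤ ε·exp(−ηε²Δt)/(1 + Δ) for every t. -/
theorem mr_ls_exponential_rate
    (N : ℕ) (hN : 1 ≤ N)
    (ε Δ η : ℝ) (hε : 0 < ε) (hΔ0 : 0 < Δ) (hΔ : Δ < 1 / 2) (hη : 0 < η)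
    (σ : ℝ) (hσ : σ = 1 / 2 - Δ)
    (Icr : Finset (Fin N)) (hIcr_pos : 0 < Icr.card) (hIcr_card : (Icr.card : ℝ) = σ * N)
    (x y e : Fin N → ℝ)
    (hx : ∀ i, x i = 1 ∨ x i = -1) (hxy : ∀ i, y i = x i)
    (he_cr : ∀ i ∈ Icr, e i = ε ∨ e i = -ε) (he_cl : ∀ i ∉ Icr, e i = 0)
    (p : ℕ → Fin N → ℝ) (θ : ℕ → ℝ)
    (hp0 : ∀ i, p 0 i = 1 / N)
    (hθ : ∀ t, θ t = ∑ i, p t i * x i * (y i + e i))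
    (hp : ∀ t i, p (t + 1) i =
      Real.exp (-η * ∑ s ∈ Finset.range (t + 1), (1 / 2) * (θ s * x i - (y i + e i)) ^ 2) /
        ∑ j, Real.exp (-η * ∑ s ∈ Finset.range (t + 1), (1 / 2) * (θ s * x j - (y j + e j)) ^ 2))
    :
    ∀ t : ℕ, |θ t - 1| ≤ ε * Real.exp (-η * ε ^ 2 * Δ * t) / (1 + Δ) := by
  have hN0 : (0:ℝ) < N := by exact_mod_cast hN
  have hσ0 : 0 < σ := by rw [hσ]; linarith
  have hσ1 : 0 < 1 - σ := by rw [hσ]; linarith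
  have hxx : ∀ i, x i * x i = 1 := by
    intro i; rcases hx i with h | h <;> rw [h] <;> norm_num
  obtain ⟨F, hF⟩ : ∃ F : ℕ → Fin N → ℝ, ∀ t i, F t i =
      Real.exp (-η * ∑ s ∈ Finset.range t, (1 / 2) * (θ s * x i - (y i + e i)) ^ 2) :=
    ⟨_, fun _ _ => rfl⟩
  obtain ⟨G, hG⟩ : ∃ G : ℕ → ℝ, ∀ t, G t =
      Real.exp (-η * ∑ s ∈ Finset.range t, (1 / 2) * (θ s - 1) ^ 2) := ⟨_, fun _ => rfl⟩
  have hFpos : ∀ t i, 0 < F t i := fun t i => by rw [hF]; exact Real.exp_pos _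
  have hGpos : ∀ t, 0 < G t := fun t => by rw [hG]; exact Real.exp_pos _
  have hpF : ∀ t i, p t i = F t i / ∑ j, F t j := by
    intro t i
    cases t with
    | zero => simp [hp0, hF]
    | succ t => rw [hp]; simp only [hF]
  have hloss : ∀ s i, (θ s * x i - (y i + e i)) ^ 2 = (θ s - 1 - x i * e i) ^ 2 := by
    intro s i
    rw [hxy]
    linear_combination ((θ s - 1)^2 - e i ^ 2) * hxx i
  have hclean : ∀ t, ∀ i ∉ Icr, F t i = G t := by
    intro t i hi
    rw [hF, hG]
    simp only [hloss]
    simp only [he_cl i hi, mul_zero, sub_zero]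
  have hsplit : ∀ t, ∑ j, F t j = (1 - σ) * N * G t + ∑ j ∈ Icr, F t j := by
    intro t
    rw [← Finset.sum_compl_add_sum Icr,
      Finset.sum_congr rfl (fun j hj => hclean t j (Finset.mem_compl.1 hj)),
      Finset.sum_const, Finset.card_compl, Fintype.card_fin, nsmul_eq_mul,
      Nat.cast_sub (by simpa using Finset.card_le_univ Icr), hIcr_card]
    ring
  have habs : ∀ i ∈ Icr, |x i * e i| = ε := by
    intro i hi
    rcases hx i with h | h <;> rcases he_cr i hi with h' | h' <;>
      rw [h, h'] <;> simp [abs_of_pos hε]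
  have hSpos : ∀ t, 0 < ∑ j, F t j := by
    intro t
    rw [hsplit]
    have h1 := Finset.sum_nonneg (s := Icr) (fun j _ => (hFpos t j).le)
    have := mul_pos (mul_pos hσ1 hN0) (hGpos t)
    linarith
  have hd : ∀ t, |θ t - 1| ≤ ε * (∑ j ∈ Icr, F t j) / ∑ j, F t j := by
    intro t
    have h1 : θ t - 1 = (∑ j ∈ Icr, F t j * (x j * e j)) / ∑ j, F t j := by
      have hs : ∑ i, p t i = 1 := by
        simp only [hpF]
        rw [← Finset.sum_div, div_self (hSpos t).ne']
      have h2 : θ t - 1 = ∑ i, p t i * (x i * e i) := by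
        rw [← hs, hθ, ← Finset.sum_sub_distrib]
        refine Finset.sum_congr rfl fun i _ => ?_
        rw [hxy]
        linear_combination p t i * hxx i
      rw [h2, Finset.sum_div]
      symm
      refine (Finset.sum_congr rfl fun i _ => ?_).trans
        (Finset.sum_subset (f := fun i => p t i * (x i * e i)) (Finset.subset_univ Icr) ?_)
      · rw [hpF]; ring
      · intro i _ hi
        simp [he_cl i hi]
    rw [h1, abs_div, abs_of_pos (hSpos t)]
    refine div_le_div_of_nonneg_right ?_ (hSpos t).le
    rw [Finset.mul_sum]
    refine (Finset.abs_sum_le_sum_abs _ _).trans (Finset.sum_le_sum fun i hi => ?_)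
    rw [abs_mul, habs i hi, abs_of_pos (hFpos t i), mul_comm]
  -- corrupted weights decay if earlier iterates are within `σ ε` of the solution
  have hA : ∀ t, (∀ s < t, |θ s - 1| ≤ σ * ε) →
      ∑ j ∈ Icr, F t j ≤ σ * N * (G t * Real.exp (-η * ε ^ 2 * Δ * t)) := by
    intro t ht
    rw [← hIcr_card, ← nsmul_eq_mul]
    refine Finset.sum_le_card_nsmul _ _ _ fun i hi => ?_
    rw [hF, hG, ← Real.exp_add, Real.exp_le_exp]
    have h3 : ∑ s ∈ Finset.range t, ((1 / 2) * (θ s - 1) ^ 2 + ε ^ 2 * Δ) ≤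
        ∑ s ∈ Finset.range t, (1 / 2) * (θ s * x i - (y i + e i)) ^ 2 := by
      refine Finset.sum_le_sum fun s hs => ?_
      rw [hloss]
      have h4 := ht s (Finset.mem_range.1 hs)
      have h5 : (θ s - 1) * (x i * e i) ≤ σ * ε * ε := by
        refine (le_abs_self _).trans ?_
        rw [abs_mul, habs i hi]
        exact mul_le_mul_of_nonneg_right h4 hε.le
      have h6 : (x i * e i) ^ 2 = ε ^ 2 := by rw [← sq_abs, habs i hi]
      rw [hσ] at h5
      nlinarith
    rw [Finset.sum_add_distrib, Finset.sum_const, Finset.card_range, nsmul_eq_mul] at h3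
    have := mul_le_mul_of_nonneg_left h3 hη.le
    linarith
  have hle1 : ∀ t : ℕ, Real.exp (-η * ε ^ 2 * Δ * t) ≤ 1 := by
    intro t
    rw [Real.exp_le_one_iff]
    have : 0 ≤ η * ε ^ 2 * Δ * t := by positivity
    linarith
  have hbd : ∀ t, |θ t - 1| ≤ σ * ε := by
    intro t
    induction t using Nat.strong_induction_on with
    | _ t ih =>
      refine (hd t).trans ?_
      rw [div_le_iff₀ (hSpos t), hsplit]
      have h1 : ∑ j ∈ Icr, F t j ≤ σ * N * G t := by
        refine (hA t ih).trans (mul_le_mul_of_nonneg_left ?_ (by positivity))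
        exact mul_le_of_le_one_right (hGpos t).le (hle1 t)
      have := mul_le_mul_of_nonneg_left h1 (mul_pos hε hσ1).le
      linarith
  intro t
  have h1 := hA t (fun s _ => hbd s)
  have h2 := Finset.sum_nonneg (s := Icr) (fun j _ => (hFpos t j).le)
  have hu := Real.exp_pos (-η * ε ^ 2 * Δ * t)
  refine (hd t).trans ?_
  rw [div_le_div_iff₀ (hSpos t) (by linarith), hsplit]
  set u := Real.exp (-η * ε ^ 2 * Δ * t)
  have hk : σ * (1 + Δ) ≤ 1 - σ := by rw [hσ]; nlinarith
  have hNGu : 0 < N * G t * u := mul_pos (mul_pos hN0 (hGpos t)) hu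
  calc ε * (∑ j ∈ Icr, F t j) * (1 + Δ)
      ≤ ε * (σ * N * (G t * u)) * (1 + Δ) := by gcongr
    _ = ε * ((σ * (1 + Δ)) * (N * G t * u)) := by ring
    _ ≤ ε * ((1 - σ) * (N * G t * u)) := by gcongr
    _ = ε * u * ((1 - σ) * N * G t) := by ring
    _ ≤ ε * u * ((1 - σ) * N * G t + ∑ j ∈ Icr, F t j) := by
        gcongr; linarith
end

section
/- In the noisy linear MR-LS dynamics, for every t ≥ 0 and every clean index i ∉ I_cr it holds that p_{t,i} ≥ 1 / ( (1 − σ) N + σ N exp(−η ε² Δ t) ). In particular, the probability of each clean example is at least 1/N and increases toward 1/((1 − σ)N). -/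
open Real Finset

/-- In the noisy linear MR-LS dynamics, every clean example's
probability satisfies p_{t,i} ≥ 1/((1 − σ)N + σN exp(−ηε²Δt)); in particular
it is at least 1/N (Lemma 6 of the paper). -/
theorem mr_ls_clean_probability_lower_bound
    (N : ℕ) (hN : 1 ≤ N)
    (ε Δ η : ℝ) (hε : 0 < ε) (hΔ0 : 0 < Δ) (hΔ : Δ < 1 / 2) (hη : 0 < η)
    (σ : ℝ) (hσ : σ = 1 / 2 - Δ)
    (Icr : Finset (Fin N)) (hIcr_pos : 0 < Icr.card) (hIcr_card : (Icr.card : ℝ) = σ * N)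
    (x y e : Fin N → ℝ)
    (hx : ∀ i, x i = 1 ∨ x i = -1) (hxy : ∀ i, y i = x i)
    (he_cr : ∀ i ∈ Icr, e i = ε ∨ e i = -ε) (he_cl : ∀ i ∉ Icr, e i = 0)
    (p : ℕ → Fin N → ℝ) (θ : ℕ → ℝ)
    (hp0 : ∀ i, p 0 i = 1 / N)
    (hθ : ∀ t, θ t = ∑ i, p t i * x i * (y i + e i))
    (hp : ∀ t i, p (t + 1) i =
      Real.exp (-η * ∑ s ∈ Finset.range (t + 1), (1 / 2) * (θ s * x i - (y i + e i)) ^ 2) /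
        ∑ j, Real.exp (-η * ∑ s ∈ Finset.range (t + 1), (1 / 2) * (θ s * x j - (y j + e j)) ^ 2))
    :
    ∀ t : ℕ, ∀ i ∉ Icr,
      p t i ≥ 1 / ((1 - σ) * N + σ * N * Real.exp (-η * ε ^ 2 * Δ * t)) ∧
      p t i ≥ 1 / N := by
  have hNpos : (0:ℝ) < N := by exact_mod_cast hN
  have hσ0 : 0 < σ := by rw [hσ]; linarith
  have hσ1 : σ < 1 := by rw [hσ]; linarith
  have hxx : ∀ i, x i * x i = 1 := by
    intro i; rcases hx i with h | h <;> rw [h] <;> norm_num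
  -- rewrite the loss
  have hloss : ∀ s i, (θ s * x i - (y i + e i)) ^ 2 = (θ s - 1 - x i * e i) ^ 2 := by
    intro s i
    rw [hxy]
    rcases hx i with h | h <;> rw [h] <;> ring
  have hlcl : ∀ s, ∀ i ∉ Icr, (θ s * x i - (y i + e i)) ^ 2 = (θ s - 1) ^ 2 := by
    intro s i hi
    rw [hloss, he_cl i hi]; ring
  obtain ⟨L, hL⟩ : ∃ L : ℕ → Fin N → ℝ, ∀ t i, L t i =
      ∑ s ∈ Finset.range t, (1 / 2) * (θ s * x i - (y i + e i)) ^ 2 :=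
    ⟨_, fun _ _ => rfl⟩
  have hpL : ∀ t i, p t i = Real.exp (-η * L t i) / ∑ j, Real.exp (-η * L t j) := by
    intro t i
    cases t with
    | zero => rw [hp0]; simp [hL]
    | succ t => rw [hp]; simp only [hL]
  have : Nonempty (Fin N) := ⟨⟨0, hN⟩⟩
  have hZ : ∀ t, 0 < ∑ j, Real.exp (-η * L t j) := fun t =>
    Finset.sum_pos (fun j _ => Real.exp_pos _) Finset.univ_nonempty
  have hpnn : ∀ t i, 0 ≤ p t i := by
    intro t i; rw [hpL]; exact div_nonneg (Real.exp_pos _).le (hZ t).le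
  have hpsum : ∀ t, ∑ i, p t i = 1 := by
    intro t
    simp only [hpL]
    rw [← Finset.sum_div, div_self (hZ t).ne']
  have hcard : ((Icrᶜ).card : ℝ) = (1 - σ) * N := by
    have h := Finset.card_add_card_compl Icr
    have h2 : (Icr.card : ℝ) + (Icrᶜ).card = N := by
      rw [Fintype.card_fin] at h
      exact_mod_cast h
    linarith
  have hden : ∀ t : ℕ, 0 < (1 - σ) * N + σ * N * Real.exp (-η * ε ^ 2 * Δ * t) := by
    intro t
    have := Real.exp_pos (-η * ε ^ 2 * Δ * t)
    have h1 : 0 < 1 - σ := by linarith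
    positivity
  have hu : ∀ i ∈ Icr, |x i * e i| = ε := by
    intro i hi
    rcases hx i with h | h <;> rcases he_cr i hi with h' | h' <;> rw [h, h'] <;>
      simp [abs_of_pos hε]
  have keyA : ∀ t : ℕ, (∀ s < t, |θ s - 1| ≤ ε * σ) → ∀ i ∉ Icr,
      p t i ≥ 1 / ((1 - σ) * N + σ * N * Real.exp (-η * ε ^ 2 * Δ * t)) := by
    intro t ht i hi
    have hcl : ∀ j ∉ Icr, L t j = L t i := by
      intro j hj
      rw [hL, hL]
      exact Finset.sum_congr rfl (fun s _ => by rw [hlcl s j hj, hlcl s i hi])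
    have hcr : ∀ j ∈ Icr, L t i + ε ^ 2 * Δ * t ≤ L t j := by
      intro j hj
      have h1 : ∑ s ∈ Finset.range t, ε ^ 2 * Δ = ε ^ 2 * Δ * t := by
        simp [mul_comm]
      rw [← h1, hL, hL, ← Finset.sum_add_distrib]
      apply Finset.sum_le_sum
      intro s hs
      rw [hlcl s i hi, hloss s j]
      have h2 := ht s (Finset.mem_range.mp hs)
      have h3 := hu j hj
      have h4 : (x j * e j) ^ 2 = ε ^ 2 := by rw [← h3, sq_abs]
      have h5 : (θ s - 1) * (x j * e j) ≤ ε * σ * ε := by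
        refine (le_abs_self _).trans ?_
        rw [abs_mul, h3]
        exact mul_le_mul_of_nonneg_right h2 hε.le
      have h6 : Δ = 1 / 2 - σ := by linarith
      rw [h6]
      linarith [h4, h5, sq ε, mul_comm (ε * σ) ε,
        show (θ s - 1 - x j * e j) ^ 2 = (θ s - 1) ^ 2 - 2 * ((θ s - 1) * (x j * e j))
          + (x j * e j) ^ 2 by ring,
        show ε ^ 2 * (1 / 2 - σ) = ε ^ 2 / 2 - ε * σ * ε by ring]
    have hZle : ∑ j, Real.exp (-η * L t j) ≤
        Real.exp (-η * L t i) * ((1 - σ) * N + σ * N * Real.exp (-η * ε ^ 2 * Δ * t)) := by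
      rw [← Finset.sum_add_sum_compl Icr]
      have h1 : ∑ j ∈ Icr, Real.exp (-η * L t j) ≤
          Icr.card • (Real.exp (-η * L t i) * Real.exp (-η * ε ^ 2 * Δ * t)) := by
        apply Finset.sum_le_card_nsmul
        intro j hj
        rw [← Real.exp_add]
        apply Real.exp_le_exp.mpr
        have := mul_le_mul_of_nonneg_left (hcr j hj) hη.le
        linarith
      have h2 : ∑ j ∈ Icrᶜ, Real.exp (-η * L t j) =
          (Icrᶜ).card • Real.exp (-η * L t i) := by
        rw [← Finset.sum_const]
        exact Finset.sum_congr rfl (fun j hj => by rw [hcl j (Finset.mem_compl.mp hj)])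
      rw [nsmul_eq_mul, hIcr_card] at h1
      rw [nsmul_eq_mul, hcard] at h2
      rw [h2]
      linarith
    rw [ge_iff_le, hpL, div_le_div_iff₀ (hden t) (hZ t), one_mul]
    exact hZle
  have keyB : ∀ t : ℕ, 1 / (N:ℝ) ≤
      1 / ((1 - σ) * N + σ * N * Real.exp (-η * ε ^ 2 * Δ * t)) := by
    intro t
    apply one_div_le_one_div_of_le (hden t)
    have h1 : Real.exp (-η * ε ^ 2 * Δ * t) ≤ 1 := by
      apply Real.exp_le_one_iff.mpr
      have : 0 ≤ η * ε ^ 2 * Δ * t := by positivity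
      linarith
    have := mul_le_mul_of_nonneg_left h1 (mul_pos hσ0 hNpos).le
    linarith
  have keyC : ∀ t : ℕ, |θ t - 1| ≤ ε * σ := by
    intro t
    induction t using Nat.strong_induction_on with
    | _ t ih =>
      have hA := keyA t ih
      have h1 : (1 - σ) ≤ ∑ j ∈ Icrᶜ, p t j := by
        have := Finset.card_nsmul_le_sum (Icrᶜ) (p t) (1 / (N:ℝ))
          (fun j hj => (keyB t).trans (hA j (Finset.mem_compl.mp hj)))
        rw [nsmul_eq_mul, hcard] at this
        rwa [mul_one_div, mul_div_assoc, div_self hNpos.ne', mul_one] at this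
      have h2 : ∑ j ∈ Icr, p t j ≤ σ := by
        have := Finset.sum_add_sum_compl Icr (p t)
        rw [hpsum] at this
        linarith
      have h3 : θ t - 1 = ∑ j ∈ Icr, p t j * (x j * e j) := by
        have h4 : θ t = ∑ j, (p t j + p t j * (x j * e j)) := by
          rw [hθ]
          refine Finset.sum_congr rfl (fun j _ => ?_)
          rw [hxy]
          linear_combination (p t j) * hxx j
        rw [h4, Finset.sum_add_distrib, hpsum, add_sub_cancel_left]
        symm
        apply Finset.sum_subset (Finset.subset_univ _)
        intro j _ hj
        rw [he_cl j hj]; ring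
      rw [h3]
      calc |∑ j ∈ Icr, p t j * (x j * e j)| ≤ ∑ j ∈ Icr, |p t j * (x j * e j)| :=
            Finset.abs_sum_le_sum_abs _ _
        _ = ∑ j ∈ Icr, ε * p t j := by
            refine Finset.sum_congr rfl (fun j hj => ?_)
            rw [abs_mul, hu j hj, abs_of_nonneg (hpnn t j), mul_comm]
        _ = ε * ∑ j ∈ Icr, p t j := by rw [Finset.mul_sum]
        _ ≤ ε * σ := mul_le_mul_of_nonneg_left h2 hε.le
  intro t i hi
  have := keyA t (fun s _ => keyC s) i hi
  exact ⟨this, (keyB t).trans this⟩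
end

section
/- In the noisy linear MR-LS dynamics, after the first multiplicative-weights update every clean example receives more than uniform probability: for every clean index i ∉ I_cr, p_{1,i} ≥ 1 / ( N (1 + σ (exp(−η ε² Δ) − 1)) ) > 1/N. -/
open Real Finset

/-- In the noisy linear MR-LS dynamics, after the first
multiplicative-weights update every clean example receives more than uniform
probability: p_{1,i} ≥ 1/(N(1 + σ(exp(−ηε²Δ) − 1))) > 1/N
(Lemma in the supplementary material). -/
theorem mr_ls_first_update_clean_probability
    (N : ℕ) (hN : 1 ≤ N)
    (ε Δ η : ℝ) (hε : 0 < ε) (hΔ0 : 0 < Δ) (hΔ : Δ < 1 / 2) (hη : 0 < η)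
    (σ : ℝ) (hσ : σ = 1 / 2 - Δ)
    (Icr : Finset (Fin N)) (hIcr_pos : 0 < Icr.card) (hIcr_card : (Icr.card : ℝ) = σ * N)
    (x y e : Fin N → ℝ)
    (hx : ∀ i, x i = 1 ∨ x i = -1) (hxy : ∀ i, y i = x i)
    (he_cr : ∀ i ∈ Icr, e i = ε ∨ e i = -ε) (he_cl : ∀ i ∉ Icr, e i = 0)
    (p : ℕ → Fin N → ℝ) (θ : ℕ → ℝ)
    (hp0 : ∀ i, p 0 i = 1 / N)
    (hθ : ∀ t, θ t = ∑ i, p t i * x i * (y i + e i))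
    (hp : ∀ t i, p (t + 1) i =
      Real.exp (-η * ∑ s ∈ Finset.range (t + 1), (1 / 2) * (θ s * x i - (y i + e i)) ^ 2) /
        ∑ j, Real.exp (-η * ∑ s ∈ Finset.range (t + 1), (1 / 2) * (θ s * x j - (y j + e j)) ^ 2))
    :
    ∀ i ∉ Icr,
      p 1 i ≥ 1 / (N * (1 + σ * (Real.exp (-η * ε ^ 2 * Δ) - 1))) ∧
      1 / (N * (1 + σ * (Real.exp (-η * ε ^ 2 * Δ) - 1))) > 1 / N := by
  have hN0 : (0 : ℝ) < N := by exact_mod_cast hN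
  have hσ0 : 0 < σ := by linarith
  have hxx : ∀ i, x i * x i = 1 := fun i => by rcases hx i with h | h <;> rw [h] <;> norm_num
  obtain ⟨δ, hδ⟩ : ∃ δ, δ = (∑ i, x i * e i) / N := ⟨_, rfl⟩
  have hθ0 : θ 0 = 1 + δ := by
    have h1 : ∀ i, p 0 i * x i * (y i + e i) = 1 / N + (x i * e i) / N := by
      intro i
      rw [hp0, hxy]
      linear_combination (1 / (N : ℝ)) * hxx i
    rw [hθ, Finset.sum_congr rfl (fun i _ => h1 i), Finset.sum_add_distrib, hδ, Finset.sum_div]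
    congr 1
    simp [hN0.ne']
  have habs : |∑ i, x i * e i| ≤ σ * N * ε := by
    have h1 : ∀ i, |x i * e i| ≤ if i ∈ Icr then ε else 0 := by
      intro i
      have hxa : |x i| = 1 := by rcases hx i with h | h <;> rw [h] <;> simp
      rw [abs_mul, hxa, one_mul]
      split_ifs with hi
      · rcases he_cr i hi with h | h <;> rw [h] <;> simp [abs_of_pos hε]
      · simp [he_cl i hi]
    calc |∑ i, x i * e i| ≤ ∑ i, |x i * e i| := Finset.abs_sum_le_sum_abs _ _
      _ ≤ ∑ i, (if i ∈ Icr then ε else 0) := Finset.sum_le_sum (fun i _ => h1 i)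
      _ = σ * N * ε := by
        rw [← hIcr_card]
        simp
  have hδa : |δ| ≤ σ * ε := by
    rw [hδ, abs_div, abs_of_pos hN0, div_le_iff₀ hN0]
    linarith
  obtain ⟨q, hq⟩ : ∃ q, q = Real.exp (-η * ε ^ 2 * Δ) := ⟨_, rfl⟩
  have hq0 : 0 < q := by rw [hq]; exact Real.exp_pos _
  have hq1 : q < 1 := by
    rw [hq, Real.exp_lt_one_iff]
    have : 0 < η * ε ^ 2 * Δ := by positivity
    linarith
  rw [← hq]
  have hfac : 0 < 1 + σ * (q - 1) := by nlinarith
  have hfac1 : 1 + σ * (q - 1) < 1 := by nlinarith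
  obtain ⟨A, hA⟩ : ∃ A, A = Real.exp (-η * (1 / 2 * δ ^ 2)) := ⟨_, rfl⟩
  have hA0 : 0 < A := by rw [hA]; exact Real.exp_pos _
  have hclean : ∀ j ∉ Icr, Real.exp (-η * ∑ s ∈ Finset.range (0 + 1),
      (1 / 2) * (θ s * x j - (y j + e j)) ^ 2) = A := by
    intro j hj
    rw [hA, zero_add, Finset.sum_range_one, hθ0, hxy, he_cl j hj]
    congr 1
    linear_combination (-η * (1 / 2) * δ ^ 2) * hxx j
  have hcorr : ∀ j ∈ Icr, Real.exp (-η * ∑ s ∈ Finset.range (0 + 1),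
      (1 / 2) * (θ s * x j - (y j + e j)) ^ 2) ≤ A * q := by
    intro j hj
    rw [hA, hq, ← Real.exp_add, zero_add, Finset.sum_range_one, hθ0, hxy, Real.exp_le_exp]
    have hd := abs_le.mp hδa
    have key : 1 / 2 * δ ^ 2 + ε ^ 2 * Δ ≤ 1 / 2 * ((1 + δ) * x j - (x j + e j)) ^ 2 := by
      rcases hx j with h | h <;> rcases he_cr j hj with hh | hh <;> rw [h, hh] <;> subst hσ <;>
        nlinarith [mul_le_mul_of_nonneg_left hd.1 hε.le, mul_le_mul_of_nonneg_left hd.2 hε.le]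
    nlinarith [mul_le_mul_of_nonneg_left key hη.le]
  intro i hi
  constructor
  · have hsum : ∑ j, Real.exp (-η * ∑ s ∈ Finset.range (0 + 1),
        (1 / 2) * (θ s * x j - (y j + e j)) ^ 2) ≤ A * (N * (1 + σ * (q - 1))) := by
      calc _ ≤ ∑ j, (A + if j ∈ Icr then A * (q - 1) else 0) := by
            apply Finset.sum_le_sum
            intro j _
            split_ifs with hj
            · linarith [hcorr j hj]
            · linarith [hclean j hj]
        _ = N * A + Icr.card * (A * (q - 1)) := by
            rw [Finset.sum_add_distrib]
            simp
        _ = _ := by rw [hIcr_card]; ring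
    have hpos : 0 < ∑ j, Real.exp (-η * ∑ s ∈ Finset.range (0 + 1),
        (1 / 2) * (θ s * x j - (y j + e j)) ^ 2) :=
      Finset.sum_pos (fun j _ => Real.exp_pos _) ⟨i, Finset.mem_univ i⟩
    have h1 := hp 0 i
    rw [hclean i hi, zero_add 1] at h1
    rw [zero_add 1] at hsum hpos
    rw [h1, ge_iff_le, div_le_div_iff₀ (by positivity) hpos]
    linarith
  · apply one_div_lt_one_div_of_lt (by positivity)
    nlinarith
end

section
/- In the noisy linear MR-LS dynamics, the total probability mass assigned to corrupted examples decays exponentially: for every t ≥ 0, Σ_{j ∈ I_cr} p_{t,j} ≤ exp(−η ε² Δ t) / (1 + Δ). -/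
open Real Finset

/-- In the noisy linear MR-LS dynamics, the total probability
mass assigned to corrupted examples decays exponentially:
Σ_{j ∈ I_cr} p_{t,j} ≤ exp(−ηε²Δt)/(1 + Δ) for every t. -/
theorem mr_ls_corrupted_mass_decays
    (N : ℕ) (hN : 1 ≤ N)
    (ε Δ η : ℝ) (hε : 0 < ε) (hΔ0 : 0 < Δ) (hΔ : Δ < 1 / 2) (hη : 0 < η)
    (σ : ℝ) (hσ : σ = 1 / 2 - Δ)
    (Icr : Finset (Fin N)) (hIcr_pos : 0 < Icr.card) (hIcr_card : (Icr.card : ℝ) = σ * N)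
    (x y e : Fin N → ℝ)
    (hx : ∀ i, x i = 1 ∨ x i = -1) (hxy : ∀ i, y i = x i)
    (he_cr : ∀ i ∈ Icr, e i = ε ∨ e i = -ε) (he_cl : ∀ i ∉ Icr, e i = 0)
    (p : ℕ → Fin N → ℝ) (θ : ℕ → ℝ)
    (hp0 : ∀ i, p 0 i = 1 / N)
    (hθ : ∀ t, θ t = ∑ i, p t i * x i * (y i + e i))
    (hp : ∀ t i, p (t + 1) i =
      Real.exp (-η * ∑ s ∈ Finset.range (t + 1), (1 / 2) * (θ s * x i - (y i + e i)) ^ 2) /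
        ∑ j, Real.exp (-η * ∑ s ∈ Finset.range (t + 1), (1 / 2) * (θ s * x j - (y j + e j)) ^ 2))
    :
    ∀ t : ℕ, ∑ j ∈ Icr, p t j ≤ Real.exp (-η * ε ^ 2 * Δ * t) / (1 + Δ) := by
  have hNpos : (0 : ℝ) < N := by exact_mod_cast hN
  have hσ0 : 0 < σ := by rw [hσ]; linarith
  -- the weights form a probability vector
  have hpnn : ∀ t i, 0 ≤ p t i := by
    intro t i
    cases t with
    | zero => rw [hp0]; positivity
    | succ t => rw [hp]; positivity
  have hpsum : ∀ t, ∑ i, p t i = 1 := by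
    intro t
    cases t with
    | zero =>
      simp only [hp0, Finset.sum_const, Finset.card_univ, Fintype.card_fin, nsmul_eq_mul]
      field_simp
    | succ t =>
      simp only [hp]
      rw [← Finset.sum_div]
      apply div_self
      apply ne_of_gt
      apply Finset.sum_pos
      · intro i _; positivity
      · exact ⟨⟨0, hN⟩, Finset.mem_univ _⟩
  have hxx : ∀ i, x i * x i = 1 := by
    intro i; rcases hx i with h | h <;> rw [h] <;> norm_num
  have hxe : ∀ i ∈ Icr, |x i * e i| = ε := by
    intro i hi
    rcases hx i with h | h <;> rcases he_cr i hi with h' | h' <;> rw [h, h'] <;>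
      simp [abs_of_pos hε]
  have hθ' : ∀ t, θ t - 1 = ∑ i ∈ Icr, p t i * (x i * e i) := by
    intro t
    have h1 : θ t = ∑ i, p t i + ∑ i, p t i * (x i * e i) := by
      rw [hθ, ← Finset.sum_add_distrib]
      apply Finset.sum_congr rfl
      intro i _
      rw [hxy]
      linear_combination p t i * hxx i
    have h2 : ∑ i ∈ Icr, p t i * (x i * e i) = ∑ i, p t i * (x i * e i) := by
      apply Finset.sum_subset (Finset.subset_univ _)
      intro i _ hi
      rw [he_cl i hi]; ring
    rw [h1, h2, hpsum]; ring
  have habs : ∀ t, |θ t - 1| ≤ (∑ i ∈ Icr, p t i) * ε := by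
    intro t
    rw [hθ', Finset.sum_mul]
    refine (Finset.abs_sum_le_sum_abs _ _).trans ?_
    apply Finset.sum_le_sum
    intro i hi
    rw [abs_mul, hxe i hi, abs_of_nonneg (hpnn t i)]
  -- losses
  have hclean : ∀ s, ∀ i ∉ Icr,
      (1 / 2) * (θ s * x i - (y i + e i)) ^ 2 = (1 / 2) * (θ s - 1) ^ 2 := by
    intro s i hi
    rw [he_cl i hi, hxy]
    linear_combination (1 / 2) * (θ s - 1) ^ 2 * hxx i
  have hcorr : ∀ s, ∑ j ∈ Icr, p s j ≤ σ → ∀ i ∈ Icr,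
      (1 / 2) * (θ s - 1) ^ 2 + ε ^ 2 * Δ ≤ (1 / 2) * (θ s * x i - (y i + e i)) ^ 2 := by
    intro s hs i hi
    have h1 : (1 / 2) * (θ s * x i - (y i + e i)) ^ 2
        = (1 / 2) * (θ s - 1) ^ 2 - (θ s - 1) * (x i * e i) + (1 / 2) * e i ^ 2 := by
      rw [hxy]
      linear_combination (1 / 2) * (θ s - 1) ^ 2 * hxx i
    have h2 : e i ^ 2 = ε ^ 2 := by
      rcases he_cr i hi with h | h <;> rw [h]; ring
    have h3 : (θ s - 1) * (x i * e i) ≤ σ * ε * ε := by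
      refine (le_abs_self _).trans ?_
      rw [abs_mul, hxe i hi]
      apply mul_le_mul_of_nonneg_right _ hε.le
      exact (habs s).trans (mul_le_mul_of_nonneg_right hs hε.le)
    rw [h1, h2]
    rw [hσ] at h3
    nlinarith
  -- one-step bound
  have hmain : ∀ t, (∀ s ∈ Finset.range (t + 1), ∑ j ∈ Icr, p s j ≤ σ) →
      ∑ j ∈ Icr, p (t + 1) j ≤ σ ∧
      ∑ j ∈ Icr, p (t + 1) j ≤ Real.exp (-η * ε ^ 2 * Δ * ((t + 1 : ℕ) : ℝ)) / (1 + Δ) := by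
    intro t ih
    set C : ℝ := ∑ s ∈ Finset.range (t + 1), (1 / 2) * (θ s - 1) ^ 2 with hC
    set w := Real.exp (-η * C) with hw
    set r := Real.exp (-η * ε ^ 2 * Δ * ((t + 1 : ℕ) : ℝ)) with hr
    set W : Fin N → ℝ := fun i =>
      Real.exp (-η * ∑ s ∈ Finset.range (t + 1), (1 / 2) * (θ s * x i - (y i + e i)) ^ 2) with hW
    have hw0 : 0 < w := Real.exp_pos _
    have hr0 : 0 < r := Real.exp_pos _
    have hr1 : r ≤ 1 := by
      rw [hr]
      apply Real.exp_le_one_iff.mpr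
      have : 0 ≤ η * ε ^ 2 * Δ * ((t + 1 : ℕ) : ℝ) := by positivity
      linarith
    have hWcl : ∀ i ∉ Icr, W i = w := by
      intro i hi
      simp only [hW, hw, hC]
      congr 2
      exact Finset.sum_congr rfl fun s _ => hclean s i hi
    have hWcr : ∀ i ∈ Icr, W i ≤ r * w := by
      intro i hi
      simp only [hW, hw, hr]
      rw [← Real.exp_add]
      apply Real.exp_le_exp.mpr
      have h := Finset.sum_le_sum fun s hs => hcorr s (ih s hs) i hi
      rw [Finset.sum_add_distrib, ← hC, Finset.sum_const, Finset.card_range, nsmul_eq_mul] at h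
      have h' := mul_le_mul_of_nonneg_left h hη.le
      linarith
    set S := ∑ j ∈ Icr, W j with hS
    have hS0 : 0 ≤ S := Finset.sum_nonneg fun i _ => (Real.exp_pos _).le
    have hSle : S ≤ σ * N * (r * w) := by
      have h := Finset.sum_le_sum hWcr
      rwa [Finset.sum_const, nsmul_eq_mul, hIcr_card] at h
    have htot : ∑ j, W j = S + (N - σ * N) * w := by
      rw [← Finset.sum_add_sum_compl Icr W, ← hS]
      congr 1
      rw [Finset.sum_congr rfl fun i hi => hWcl i (Finset.mem_compl.mp hi), Finset.sum_const,
        nsmul_eq_mul, Finset.card_compl, Nat.cast_sub (Finset.card_le_univ _), hIcr_card,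
        Fintype.card_fin]
    have hP : ∑ j ∈ Icr, p (t + 1) j = S / (S + (N - σ * N) * w) := by
      rw [← htot, hS, Finset.sum_div]
      exact Finset.sum_congr rfl fun i _ => hp t i
    have hNw : 0 < N * w := mul_pos hNpos hw0
    have hden : 0 < S + (N - σ * N) * w := by
      have : 0 < (1 - σ) * (N * w) := mul_pos (by linarith) hNw
      linarith
    rw [hP]
    constructor
    · rw [div_le_iff₀ hden]
      have h1 : σ * (N * w) * r ≤ σ * (N * w) * 1 :=
        mul_le_mul_of_nonneg_left hr1 (by positivity)
      have h2 : S ≤ σ * (N * w) := by linarith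
      have h3 : (1 - σ) * S ≤ (1 - σ) * (σ * (N * w)) :=
        mul_le_mul_of_nonneg_left h2 (by linarith)
      linarith
    · rw [div_le_div_iff₀ hden (by linarith)]
      have h1 : (1 + Δ) * S ≤ (1 + Δ) * (σ * N * (r * w)) :=
        mul_le_mul_of_nonneg_left hSle (by linarith)
      have h2 : (1 + Δ) * σ ≤ 1 - σ := by rw [hσ]; nlinarith
      have h3 := mul_le_mul_of_nonneg_right h2 (mul_pos hr0 hNw).le
      have h4 : 0 ≤ r * S := by positivity
      linarith
  have hP0 : ∑ j ∈ Icr, p 0 j = σ := by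
    simp only [hp0, Finset.sum_const, nsmul_eq_mul, hIcr_card]
    field_simp
  have hall : ∀ t, ∑ j ∈ Icr, p t j ≤ σ := by
    intro t
    induction t using Nat.strong_induction_on with
    | _ t ih =>
      cases t with
      | zero => exact hP0.le
      | succ t => exact (hmain t fun s hs => ih s (Finset.mem_range.mp hs)).1
  intro t
  cases t with
  | zero =>
    rw [hP0]
    simp only [Nat.cast_zero, mul_zero, Real.exp_zero]
    rw [le_div_iff₀ (by linarith), hσ]
    nlinarith
  | succ t => exact (hmain t fun s _ => hall s).2
end
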